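/- For every path-loss exponent α > 2 and every constant b > 0, the planar integral ∫_{ℝ²} (1 − 1/(1 + b‖x‖^{−α})) dx converges and equals b^{2/α} · π² · (2/α) / sin(2π/α); equivalently, 2π ∫_0^∞ (1 − 1/(1 + b t^{−α})) t dt = b^{2/α} π² (2/α) / sin(π·(2/α)). -/

import Mathlib

open MeasureTheory Real

theorem radial_aux (α b : ℝ) (hα : 2 < α) (hb : 0 < b) :
    ∫ t in Set.Ioi (0 : ℝ), (1 - 1 / (1 + b * t ^ (-α))) * t
      = b ^ (2 / α) * (1 / α) * (π / Real.sin (π * (2 / α))) := by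
  have hα0 : 0 < α := by linarith
  have hd0 : 0 < 2 / α := by positivity
  have hd1 : 2 / α < 1 := by rw [div_lt_one hα0]; exact hα
  -- inner integral in t
  have inner : ∀ y ∈ Set.Ioi (0 : ℝ), ∫ t in Set.Ioi (0 : ℝ), t * exp (-((t ^ α + b) * y))
      = (1 / α * Gamma (2 / α)) * (y ^ ((1 - 2 / α) - 1) * exp (-(b * y))) := by
    intro y hy
    have h := integral_rpow_mul_exp_neg_mul_rpow (p := α) (q := 1) (b := y) hα0 (by norm_num) hy
    have : ∀ t : ℝ, t * exp (-((t ^ α + b) * y))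
        = exp (-(b * y)) * (t ^ (1 : ℝ) * exp (- y * t ^ α)) := by
      intro t
      rw [rpow_one, mul_left_comm, ← exp_add]; congr 2; ring
    simp_rw [this]
    rw [integral_const_mul, h]
    have e1 : (1 + 1 : ℝ) / α = 2 / α := by norm_num
    have e2 : -(1 + 1 : ℝ) / α = (1 - 2 / α) - 1 := by ring
    rw [e1, e2]; ring
  have inner_int : ∀ y ∈ Set.Ioi (0 : ℝ),
      IntegrableOn (fun t : ℝ => t * exp (-((t ^ α + b) * y))) (Set.Ioi 0) := by
    intro y hy
    have h := integrableOn_rpow_mul_exp_neg_mul_rpow (p := α) (s := 1) (b := y)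
      (by norm_num) (by linarith) hy
    have : (fun t : ℝ => t * exp (-((t ^ α + b) * y)))
        = fun t => exp (-(b * y)) * (t ^ (1 : ℝ) * exp (- y * t ^ α)) := by
      ext t
      rw [rpow_one, mul_left_comm, ← exp_add]; congr 2; ring
    rw [this]
    exact h.const_mul _
  have outer_int : IntegrableOn (fun y : ℝ => (1 / α * Gamma (2 / α)) *
      (y ^ ((1 - 2 / α) - 1) * exp (-(b * y)))) (Set.Ioi 0) := by
    have h := integrableOn_rpow_mul_exp_neg_mul_rpow (p := 1) (s := (1 - 2 / α) - 1) (b := b)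
      (by linarith) (by norm_num) hb
    simp only [rpow_one, neg_mul] at h
    exact h.const_mul _
  have hint : Integrable (Function.uncurry fun t y : ℝ => t * exp (-((t ^ α + b) * y)))
      ((volume.restrict (Set.Ioi 0)).prod (volume.restrict (Set.Ioi 0))) := by
    have hm : Measurable (Function.uncurry fun t y : ℝ => t * exp (-((t ^ α + b) * y))) := by
      unfold Function.uncurry
      fun_prop
    rw [integrable_prod_iff' hm.aestronglyMeasurable]
    constructor
    · filter_upwards [ae_restrict_mem measurableSet_Ioi] with y hy
      exact inner_int y hy
    · refine outer_int.congr ?_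
      filter_upwards [ae_restrict_mem measurableSet_Ioi] with y hy
      rw [← inner y hy]
      refine setIntegral_congr_fun measurableSet_Ioi ?_
      intro t ht
      have ht' : (0 : ℝ) < t := ht
      simp only [Function.uncurry]
      rw [Real.norm_of_nonneg (by positivity)]
  have key : ∀ t ∈ Set.Ioi (0 : ℝ), (1 - 1 / (1 + b * t ^ (-α))) * t
      = b * ∫ y in Set.Ioi (0 : ℝ), t * exp (-((t ^ α + b) * y)) := by
    intro t ht
    have ht' : (0 : ℝ) < t := ht
    have hp : 0 < t ^ α := by positivity
    rw [integral_const_mul]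
    have h := integral_exp_mul_Ioi (a := -(t ^ α + b)) (by linarith) 0
    simp only [neg_mul, mul_zero, neg_zero, exp_zero] at h
    rw [h, rpow_neg ht'.le]
    field_simp
    ring
  rw [setIntegral_congr_fun measurableSet_Ioi key, integral_const_mul,
    integral_integral_swap hint, setIntegral_congr_fun measurableSet_Ioi inner,
    integral_const_mul, integral_rpow_mul_exp_neg_mul_Ioi (by linarith) hb,
    ← Real.Gamma_mul_Gamma_one_sub, one_div b, inv_rpow hb.le, ← rpow_neg hb.le]
  have : b ^ (2 / α) = b * b ^ (-(1 - 2 / α)) := by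
    nth_rw 2 [← rpow_one b]
    rw [← rpow_add hb]; congr 1; ring
  rw [this]; ring

/-- For every path-loss exponent `α > 2` and every constant `b > 0`, the planar integral
`∫_{ℝ²} (1 − 1/(1 + b‖x‖^{−α})) dx` equals `b^{2/α} · π² · (2/α) / sin(2π/α)`; equivalently,
`2π ∫_0^∞ (1 − 1/(1 + b t^{−α})) t dt` equals the same value. -/
theorem planar_interference_integral (α b : ℝ) (hα : 2 < α) (hb : 0 < b) :
    (∫ x : EuclideanSpace ℝ (Fin 2), (1 - 1 / (1 + b * ‖x‖ ^ (-α)))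
        = b ^ (2 / α) * π ^ 2 * (2 / α) / Real.sin (2 * π / α))
    ∧ (2 * π * ∫ t in Set.Ioi (0 : ℝ), (1 - 1 / (1 + b * t ^ (-α))) * t
        = b ^ (2 / α) * π ^ 2 * (2 / α) / Real.sin (π * (2 / α))) := by
  have h := radial_aux α b hα hb
  have h2 : 2 * π * ∫ t in Set.Ioi (0 : ℝ), (1 - 1 / (1 + b * t ^ (-α))) * t
        = b ^ (2 / α) * π ^ 2 * (2 / α) / Real.sin (π * (2 / α)) := by
    rw [h]; ring
  refine ⟨?_, h2⟩
  have e : 2 * π / α = π * (2 / α) := by ring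
  rw [e, ← h2,
    integral_fun_norm_addHaar volume (fun r : ℝ => 1 - 1 / (1 + b * r ^ (-α)))]
  have hv : (volume : Measure (EuclideanSpace ℝ (Fin 2))).real (Metric.ball 0 1) = π := by
    simp [Measure.real, EuclideanSpace.volume_ball_fin_two, pi_pos.le]
  rw [hv, finrank_euclideanSpace_fin]
  simp only [nsmul_eq_mul, smul_eq_mul, Nat.add_one_sub_one, pow_one, Nat.cast_ofNat]
  rw [← mul_assoc]
  congr 1
  refine setIntegral_congr_fun measurableSet_Ioi ?_
  intro t _
  simp only
  ring
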